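/- Fix l, r ∈ ℝ. Then the set of real numbers λ ≠ 0 for which there exists a solution (φ, u) of −(pφ')' + qφ = λwφ on [a,b] with φ not identically zero, u(a) = l·φ(a), u(b) = r·φ(b), and λ·∫ₐᵇ w|φ|² ≤ 0, is finite. -/

import Mathlib

open MeasureTheory Real Complex

/-!
Eigenfunctions for distinct real eigenvalues are orthogonal with respect to the indefinite weight
`w`. Hence a combination `Φ = ∑ cᵢ φᵢ` of real ghost states, which solves the equation with
right-hand side `w Ψ`, `Ψ = ∑ cᵢ λᵢ φᵢ`, satisfies
`∫ w ⟪Ψ, Φ⟫ = ∑ cᵢ² λᵢ ∫ w ‖φᵢ‖² ≤ 0`. If `Φ` vanishes at both endpoints, the left side is the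
energy `∫ p⁻¹ ‖U‖² + q ‖Φ‖²` with `U = p Φ'`, and if `Φ` also vanishes on a sufficiently fine
finite set `T`, depending on `p` and `q` only, the kinetic term dominates the potential and forces
`Φ = 0`. More real ghost states than conditions `Φ = 0` on `T` would therefore be linearly
dependent; but a linear relation between them may be multiplied by any power of the eigenvalues
where `w ≠ 0`, so it is trivial.
-/

section SturmLiouville

open Set Filter Topology InnerProductSpace Interval

section IndefiniteIntegral

variable {E : Type*} [NormedAddCommGroup E] [NormedSpace ℝ E] {a b : ℝ} {F G f g : ℝ → E}

/-- `F` is an indefinite integral of the integrable function `f` on the interval with endpoints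
`a` and `b`, in either order; this is the sense in which differential equations with integrable
coefficients are solved. -/
structure IsIndefiniteIntegral (F f : ℝ → E) (a b : ℝ) : Prop where
  intervalIntegrable : IntervalIntegrable f volume a b
  eq_add_integral : ∀ x ∈ [[a, b]], F x = F a + ∫ t in a..x, f t

namespace IsIndefiniteIntegral

theorem integral_eq_sub (hF : IsIndefiniteIntegral F f a b) {x y : ℝ} (hx : x ∈ [[a, b]])
    (hy : y ∈ [[a, b]]) : ∫ t in x..y, f t = F y - F x := by
  rw [hF.eq_add_integral x hx, hF.eq_add_integral y hy, add_sub_add_left_eq_sub,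
    intervalIntegral.integral_interval_sub_left] <;>
  exact hF.intervalIntegrable.mono_set (uIcc_subset_uIcc left_mem_uIcc ‹_›)

theorem add (hF : IsIndefiniteIntegral F f a b) (hG : IsIndefiniteIntegral G g a b) :
    IsIndefiniteIntegral (fun x => F x + G x) (fun x => f x + g x) a b where
  intervalIntegrable := hF.intervalIntegrable.add hG.intervalIntegrable
  eq_add_integral x hx := by
    have hsub : [[a, x]] ⊆ [[a, b]] := uIcc_subset_uIcc left_mem_uIcc hx
    rw [intervalIntegral.integral_add (hF.intervalIntegrable.mono_set hsub)
      (hG.intervalIntegrable.mono_set hsub), hF.eq_add_integral x hx, hG.eq_add_integral x hx]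
    abel

theorem sum_smul {ι : Type*} (s : Finset ι) (c : ι → ℝ) {F f : ι → ℝ → E}
    (hF : ∀ i, IsIndefiniteIntegral (F i) (f i) a b) :
    IsIndefiniteIntegral (fun x => ∑ i ∈ s, c i • F i x) (fun x => ∑ i ∈ s, c i • f i x) a b := by
  have hint (i : ι) : IntervalIntegrable (fun t => c i • f i t) volume a b :=
    (hF i).intervalIntegrable.smul (c i)
  refine ⟨by simpa only [Finset.sum_fn] using IntervalIntegrable.sum s fun i _ => hint i,
    fun x hx => ?_⟩
  rw [intervalIntegral.integral_finsetSum fun i _ =>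
    (hint i).mono_set (uIcc_subset_uIcc left_mem_uIcc hx), ← Finset.sum_add_distrib]
  refine Finset.sum_congr rfl fun i _ => ?_
  rw [intervalIntegral.integral_smul, (hF i).eq_add_integral x hx, smul_add]

theorem absolutelyContinuousOnInterval (hF : IsIndefiniteIntegral F f a b) :
    AbsolutelyContinuousOnInterval F a b := by
  have hnorm := hF.intervalIntegrable.norm.absolutelyContinuousOnInterval_intervalIntegral
    left_mem_uIcc
  refine squeeze_zero' (.of_forall fun I => Finset.sum_nonneg fun _ _ => dist_nonneg) ?_ hnorm
  rw [eventually_inf_principal]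
  refine .of_forall fun I hI => Finset.sum_le_sum fun i hi => ?_
  obtain ⟨hx, hy⟩ := hI.1 i hi
  have hint {z : ℝ} (hz : z ∈ [[a, b]]) : IntervalIntegrable (fun t => ‖f t‖) volume a z :=
    hF.intervalIntegrable.norm.mono_set (uIcc_subset_uIcc left_mem_uIcc hz)
  rw [dist_eq_norm, ← hF.integral_eq_sub hy hx, Real.dist_eq,
    intervalIntegral.integral_interval_sub_left (hint hx) (hint hy)]
  exact intervalIntegral.norm_integral_le_abs_integral_norm

theorem continuousOn (hF : IsIndefiniteIntegral F f a b) : ContinuousOn F [[a, b]] :=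
  hF.absolutelyContinuousOnInterval.continuousOn

theorem ae_hasDerivAt [CompleteSpace E] (hF : IsIndefiniteIntegral F f a b) :
    ∀ᵐ x ∂volume.restrict (Ι a b), HasDerivAt F (f x) x := by
  rw [ae_restrict_iff' measurableSet_uIoc]
  filter_upwards [hF.intervalIntegrable.ae_hasDerivAt_integral, Measure.ae_ne volume (max a b)]
    with x hderiv hne hx
  refine ((hderiv (uIoc_subset_uIcc hx) a left_mem_uIcc).const_add (F a)).congr_of_eventuallyEq ?_
  filter_upwards [Icc_mem_nhds hx.1 (hx.2.lt_of_ne hne)] with y hy using hF.eq_add_integral y hy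

/- All but countably many zeros of `F` are accumulated by zeros from the right, and a nonzero
derivative is impossible at such a point. -/
theorem ae_eq_zero_imp [CompleteSpace E] (hF : IsIndefiniteIntegral F f a b) :
    ∀ᵐ x ∂volume.restrict (Ι a b), F x = 0 → f x = 0 := by
  have hisolated := countable_image_lt_image_Ioi_within {x | F x = 0} id
  filter_upwards [hF.ae_hasDerivAt, ae_restrict_of_ae (hisolated.ae_notMem volume)]
    with x hderiv hx hFx
  by_contra hne
  obtain ⟨z, hxz, hz⟩ := mem_nhdsGT_iff_exists_Ioo_subset.1
    ((hderiv.eventually_ne hne).filter_mono (nhdsGT_le_nhdsNE x))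
  exact hx ⟨hFx, z, hxz, fun y hFy hxy => not_lt.1 fun hyz => hz ⟨hxy, hyz⟩ hFy⟩

theorem of_absolutelyContinuousOnInterval {F f : ℝ → ℝ}
    (hF : AbsolutelyContinuousOnInterval F a b)
    (hderiv : ∀ᵐ x ∂volume.restrict (Ι a b), HasDerivAt F (f x) x) :
    IsIndefiniteIntegral F f a b := by
  have hae : deriv F =ᵐ[volume.restrict (Ι a b)] f := hderiv.mono fun x hx => hx.deriv
  refine ⟨hF.intervalIntegrable_deriv.congr_ae hae, fun x hx => ?_⟩
  have hsub : [[a, x]] ⊆ [[a, b]] := uIcc_subset_uIcc left_mem_uIcc hx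
  have hae' : deriv F =ᵐ[volume.restrict (Ι a x)] f :=
    ae_restrict_of_ae_restrict_of_subset (uIoc_subset_uIoc_of_uIcc_subset_uIcc hsub) hae
  rw [← intervalIntegral.integral_congr_ae_restrict hae', (hF.mono hsub).integral_deriv_eq_sub,
    add_sub_cancel]

theorem eq_zero_of_integral_norm_le_half (hF : IsIndefiniteIntegral F f a b) {k : ℝ → ℝ}
    (hk : IntervalIntegrable k volume a b) (hfk : ∀ t ∈ [[a, b]], ‖f t‖ ≤ ‖k t‖ * ‖F t‖)
    {x y : ℝ} (hx : x ∈ [[a, b]]) (hy : y ∈ [[a, b]]) (hxy : |∫ t in x..y, ‖k t‖| ≤ 1 / 2)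
    (hFx : F x = 0) : F y = 0 := by
  have hsub : [[x, y]] ⊆ [[a, b]] := uIcc_subset_uIcc hx hy
  obtain ⟨m, hm, hmax⟩ := isCompact_uIcc.exists_isMaxOn nonempty_uIcc
    (hF.continuousOn.mono hsub).norm
  have hsub' : [[x, m]] ⊆ [[x, y]] := uIcc_subset_uIcc left_mem_uIcc hm
  have hbound : ∀ᵐ t ∂volume.restrict (Ι x m), ‖f t‖ ≤ ‖k t‖ * ‖F m‖ :=
    (ae_restrict_mem measurableSet_uIoc).mono fun t ht => by
      have ht' : t ∈ [[x, y]] := hsub' (uIoc_subset_uIcc ht)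
      exact (hfk t (hsub ht')).trans (by gcongr; exact hmax ht')
  have hhalf : ‖F m‖ ≤ 1 / 2 * ‖F m‖ := calc
    ‖F m‖ = ‖∫ t in x..m, f t‖ := by rw [hF.integral_eq_sub hx (hsub hm), hFx, sub_zero]
    _ ≤ |∫ t in x..m, ‖k t‖ * ‖F m‖| := intervalIntegral.norm_integral_le_abs_of_norm_le hbound
      ((hk.norm.mono_set (hsub'.trans hsub)).mul_const _)
    _ = |∫ t in x..m, ‖k t‖| * ‖F m‖ := by
      rw [intervalIntegral.integral_mul_const, abs_mul, abs_norm]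
    _ ≤ |∫ t in x..y, ‖k t‖| * ‖F m‖ := by
      refine mul_le_mul_of_nonneg_right ?_ (norm_nonneg _)
      exact intervalIntegral.abs_integral_mono_interval
        (uIoc_subset_uIoc_of_uIcc_subset_uIcc hsub') (.of_forall fun _ => norm_nonneg _)
        (hk.norm.mono_set hsub)
    _ ≤ 1 / 2 * ‖F m‖ := by gcongr
  have hFy : ‖F y‖ ≤ ‖F m‖ := hmax right_mem_uIcc
  exact norm_le_zero_iff.1 (by linarith)

theorem eq_zero_of_norm_le_mul_norm (hF : IsIndefiniteIntegral F f a b) {k : ℝ → ℝ}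
    (hk : IntervalIntegrable k volume a b) (hfk : ∀ t ∈ [[a, b]], ‖f t‖ ≤ ‖k t‖ * ‖F t‖)
    {x y : ℝ} (hx : x ∈ [[a, b]]) (hy : y ∈ [[a, b]]) (hFx : F x = 0) : F y = 0 := by
  refine isPreconnected_uIcc.induction₂' (fun s t => F s = 0 → F t = 0) (fun s hs => ?_)
    (fun _ _ _ _ _ _ hst htu => htu ∘ hst) hx hy hFx
  have hprim : IsIndefiniteIntegral (fun t => ∫ r in a..t, ‖k r‖) (fun t => ‖k t‖) a b :=
    ⟨hk.norm, fun t _ => by simp⟩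
  have hnear := (hprim.continuousOn s hs).eventually (Metric.closedBall_mem_nhds _ one_half_pos)
  filter_upwards [hnear, self_mem_nhdsWithin] with t hst ht
  rw [Real.dist_eq, ← hprim.integral_eq_sub hs ht] at hst
  exact ⟨hF.eq_zero_of_integral_norm_le_half hk hfk hs ht hst,
    hF.eq_zero_of_integral_norm_le_half hk hfk ht hs
      (by rwa [intervalIntegral.integral_symm, abs_neg])⟩

end IsIndefiniteIntegral

end IndefiniteIntegral

section InnerProduct

variable {E : Type*} [NormedAddCommGroup E] [InnerProductSpace ℝ E] {a b : ℝ} {F G f g : ℝ → E}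

theorem absolutelyContinuousOnInterval_inner (hF : AbsolutelyContinuousOnInterval F a b)
    (hG : AbsolutelyContinuousOnInterval G a b) :
    AbsolutelyContinuousOnInterval (fun x => ⟪F x, G x⟫_ℝ) a b := by
  obtain ⟨C, hC⟩ := hF.exists_bound
  obtain ⟨D, hD⟩ := hG.exists_bound
  refine squeeze_zero' (.of_forall fun I => Finset.sum_nonneg fun _ _ => dist_nonneg) ?_
    (by simpa using (Tendsto.const_mul C hG).add (Tendsto.const_mul D hF))
  rw [eventually_inf_principal]
  refine .of_forall fun I hI => ?_
  rw [Finset.mul_sum, Finset.mul_sum, ← Finset.sum_add_distrib]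
  refine Finset.sum_le_sum fun i hi => ?_
  obtain ⟨hx, hy⟩ := hI.1 i hi
  generalize (I.2 i).1 = x at hx ⊢
  generalize (I.2 i).2 = y at hy ⊢
  calc dist ⟪F x, G x⟫_ℝ ⟪F y, G y⟫_ℝ
      = ‖⟪F x, G x - G y⟫_ℝ + ⟪F x - F y, G y⟫_ℝ‖ := by
        rw [dist_eq_norm, inner_sub_right, inner_sub_left, sub_add_sub_cancel]
    _ ≤ ‖F x‖ * ‖G x - G y‖ + ‖F x - F y‖ * ‖G y‖ :=
        (norm_add_le _ _).trans (add_le_add (norm_inner_le_norm _ _) (norm_inner_le_norm _ _))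
    _ ≤ C * dist (G x) (G y) + D * dist (F x) (F y) := by
        rw [dist_eq_norm, dist_eq_norm, mul_comm D]
        gcongr
        exacts [hC x hx, hD y hy]

theorem IsIndefiniteIntegral.inner [CompleteSpace E] (hF : IsIndefiniteIntegral F f a b)
    (hG : IsIndefiniteIntegral G g a b) :
    IsIndefiniteIntegral (fun x => ⟪F x, G x⟫_ℝ) (fun x => ⟪F x, g x⟫_ℝ + ⟪f x, G x⟫_ℝ) a b := by
  refine .of_absolutelyContinuousOnInterval (absolutelyContinuousOnInterval_inner
    hF.absolutelyContinuousOnInterval hG.absolutelyContinuousOnInterval) ?_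
  filter_upwards [hF.ae_hasDerivAt, hG.ae_hasDerivAt] with x hFx hGx using hFx.inner ℝ hGx

end InnerProduct

theorem sq_integral_mul_le_integral_mul_integral {X : Type*} [MeasurableSpace X] {μ : Measure X}
    {P v : X → ℝ} (hP_nonneg : ∀ᵐ x ∂μ, 0 ≤ P x) (hP : Integrable P μ)
    (hPv : Integrable (fun x => P x * v x) μ) (hPv2 : Integrable (fun x => P x * v x ^ 2) μ) :
    (∫ x, P x * v x ∂μ) ^ 2 ≤ (∫ x, P x ∂μ) * ∫ x, P x * v x ^ 2 ∂μ := by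
  have hquad (s : ℝ) : 0 ≤ (∫ x, P x ∂μ) * (s * s) + (2 * ∫ x, P x * v x ∂μ) * s
      + ∫ x, P x * v x ^ 2 ∂μ := calc
    0 ≤ ∫ x, P x * (s + v x) ^ 2 ∂μ :=
      integral_nonneg_of_ae (hP_nonneg.mono fun x hx => mul_nonneg hx (sq_nonneg _))
    _ = ∫ x, P x * (s * s) + P x * v x * (2 * s) + P x * v x ^ 2 ∂μ := by
      congr with x
      ring
    _ = _ := by
      rw [integral_add ((hP.mul_const _).fun_add (hPv.mul_const _)) hPv2,
        integral_add (hP.mul_const _) (hPv.mul_const _), integral_mul_const, integral_mul_const]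
      ring
  have hdiscrim := discrim_le_zero hquad
  rw [discrim] at hdiscrim
  linarith

theorem exists_finset_forall_exists_dist_lt {X Y : Type*} [TopologicalSpace X]
    [PseudoMetricSpace Y] {K : Set X} (hK : IsCompact K) {f : X → Y} (hf : ContinuousOn f K)
    {δ : ℝ} (hδ : 0 < δ) : ∃ T : Finset X, ∀ x ∈ K, ∃ y ∈ T, y ∈ K ∧ dist (f x) (f y) < δ := by
  obtain ⟨T, hTK, hcover⟩ := hK.elim_nhdsWithin_subcover (fun y => f ⁻¹' Metric.ball (f y) δ)
    fun y hy => hf y hy (Metric.ball_mem_nhds _ hδ)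
  refine ⟨T, fun x hx => ?_⟩
  obtain ⟨y, hyT, hxy⟩ := mem_iUnion₂.1 (hcover hx)
  exact ⟨y, hyT, hTK y hyT, hxy⟩

theorem exists_ne_zero_forall_sum_smul_eq_zero {𝕜 V X ι : Type*} [Field 𝕜] [AddCommGroup V]
    [Module 𝕜 V] [FiniteDimensional 𝕜 V] [Fintype ι] (f : ι → X → V) (T : Finset X)
    (hcard : T.card * Module.finrank 𝕜 V < Fintype.card ι) :
    ∃ c : ι → 𝕜, c ≠ 0 ∧ ∀ y ∈ T, ∑ i, c i • f i y = 0 := by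
  have hdep : ¬ LinearIndependent 𝕜 fun i (y : T) => f i y := fun hind =>
    hcard.not_ge (by simpa [Module.finrank_pi_fintype] using hind.fintype_card_le_finrank)
  obtain ⟨c, hsum, i, hi⟩ := Fintype.not_linearIndependent_iff.1 hdep
  exact ⟨c, fun hc => hi (congrFun hc i), fun y hy => by simpa using congrFun hsum ⟨y, hy⟩⟩

theorem eq_zero_of_forall_sum_pow_smul_eq_zero {𝕜 V ι : Type*} [Field 𝕜] [AddCommGroup V]
    [Module 𝕜 V] [Fintype ι] {μ : ι → 𝕜} (hμ : Function.Injective μ) {v : ι → V}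
    (hv : ∀ n : ℕ, ∑ i, μ i ^ n • v i = 0) (i : ι) : v i = 0 := by
  classical
  have hpoly (p : Polynomial 𝕜) : ∑ j, p.eval (μ j) • v j = 0 := by
    simp_rw [Polynomial.eval_eq_sum_range, Finset.sum_smul, mul_smul]
    rw [Finset.sum_comm]
    simp_rw [← Finset.smul_sum, hv, smul_zero, Finset.sum_const_zero]
  have hLagrange := hpoly (Lagrange.basis Finset.univ μ i)
  rw [Finset.sum_eq_single i, Lagrange.eval_basis_self hμ.injOn (Finset.mem_univ i), one_smul]
    at hLagrange
  · exact hLagrange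
  · intro j _ hji
    rw [Lagrange.eval_basis_of_ne hji.symm (Finset.mem_univ j), zero_smul]
  · exact fun hi => absurd (Finset.mem_univ i) hi

theorem inner_sub_inner_eq_zero_of_smul_add_smul_eq_zero {E : Type*} [NormedAddCommGroup E]
    [InnerProductSpace ℝ E] {α : ℝ × ℝ} (hα : α ≠ 0) {v v' z z' : E}
    (h : α.1 • v + α.2 • z = 0) (h' : α.1 • v' + α.2 • z' = 0) : ⟪z, v'⟫_ℝ - ⟪v, z'⟫_ℝ = 0 := by
  have hfst : α.1 * (⟪z, v'⟫_ℝ - ⟪v, z'⟫_ℝ) = 0 := by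
    have hz := congrArg (⟪z, ·⟫_ℝ) h'
    have hz' := congrArg (⟪·, z'⟫_ℝ) h
    simp only [inner_add_right, inner_add_left, real_inner_smul_right, real_inner_smul_left,
      inner_zero_right, inner_zero_left] at hz hz'
    linear_combination hz - hz'
  have hsnd : α.2 * (⟪z, v'⟫_ℝ - ⟪v, z'⟫_ℝ) = 0 := by
    have hv := congrArg (⟪v, ·⟫_ℝ) h'
    have hv' := congrArg (⟪·, v'⟫_ℝ) h
    simp only [inner_add_right, inner_add_left, real_inner_smul_right, real_inner_smul_left,
      inner_zero_right, inner_zero_left] at hv hv'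
    linear_combination hv' - hv
  by_contra hne
  exact hα (Prod.ext ((mul_eq_zero.1 hfst).resolve_right hne)
    ((mul_eq_zero.1 hsnd).resolve_right hne))

section Solutions

variable {E : Type*} [NormedAddCommGroup E] [InnerProductSpace ℝ E]
  {φ u ψ φ' u' ψ' : ℝ → E} {P q w : ℝ → ℝ} {a b : ℝ}

/-- `φ` solves the Sturm–Liouville equation `-(p φ')' + q φ = w ψ` with quasi-derivative
`u = p φ'`, written as a first-order system with `P = 1 / p`. The eigenvalue equation is the case
`ψ = lam • φ`; a general right-hand side is allowed so that linear combinations of eigenfunctions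
for different eigenvalues are again solutions. -/
structure SolvesSturmLiouville (P q w : ℝ → ℝ) (a b : ℝ) (φ u ψ : ℝ → E) : Prop where
  isIndefiniteIntegral : IsIndefiniteIntegral φ (fun t => P t • u t) a b
  isIndefiniteIntegral_quasiDeriv :
    IsIndefiniteIntegral u (fun t => q t • φ t - w t • ψ t) a b

namespace SolvesSturmLiouville

theorem continuousOn (h : SolvesSturmLiouville P q w a b φ u ψ) : ContinuousOn φ [[a, b]] :=
  h.isIndefiniteIntegral.continuousOn

theorem continuousOn_quasiDeriv (h : SolvesSturmLiouville P q w a b φ u ψ) :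
    ContinuousOn u [[a, b]] :=
  h.isIndefiniteIntegral_quasiDeriv.continuousOn

theorem sum_smul {ι : Type*} (s : Finset ι) (c : ι → ℝ) {φ u ψ : ι → ℝ → E}
    (h : ∀ i, SolvesSturmLiouville P q w a b (φ i) (u i) (ψ i)) :
    SolvesSturmLiouville P q w a b (fun x => ∑ i ∈ s, c i • φ i x) (fun x => ∑ i ∈ s, c i • u i x)
      (fun x => ∑ i ∈ s, c i • ψ i x) where
  isIndefiniteIntegral := by
    simpa only [Finset.smul_sum, smul_comm (P _)] using
      IsIndefiniteIntegral.sum_smul s c fun i => (h i).isIndefiniteIntegral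
  isIndefiniteIntegral_quasiDeriv := by
    simpa only [Finset.smul_sum, smul_comm (q _), smul_comm (w _), smul_sub,
      Finset.sum_sub_distrib] using
      IsIndefiniteIntegral.sum_smul s c fun i => (h i).isIndefiniteIntegral_quasiDeriv

theorem ae_eq_zero_imp [CompleteSpace E] (h : SolvesSturmLiouville P q w a b φ u ψ)
    (hP : ∀ᵐ x ∂volume.restrict (Ι a b), P x ≠ 0) :
    ∀ᵐ x ∂volume.restrict (Ι a b), φ x = 0 → u x = 0 ∧ w x • ψ x = 0 := by
  filter_upwards [hP, h.isIndefiniteIntegral.ae_eq_zero_imp,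
    h.isIndefiniteIntegral_quasiDeriv.ae_eq_zero_imp] with x hPx hφ hu hφx
  have hux : u x = 0 := (smul_eq_zero.1 (hφ hφx)).resolve_left hPx
  exact ⟨hux, by simpa [hφx] using hu hux⟩

theorem isIndefiniteIntegral_inner [CompleteSpace E] (h : SolvesSturmLiouville P q w a b φ u ψ)
    (h' : SolvesSturmLiouville P q w a b φ' u' ψ') :
    IsIndefiniteIntegral (fun x => ⟪u x, φ' x⟫_ℝ)
      (fun x => P x * ⟪u x, u' x⟫_ℝ + q x * ⟪φ x, φ' x⟫_ℝ - w x * ⟪ψ x, φ' x⟫_ℝ) a b := by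
  simpa only [real_inner_smul_right, inner_sub_left, real_inner_smul_left, add_sub_assoc] using
    h.isIndefiniteIntegral_quasiDeriv.inner h'.isIndefiniteIntegral

theorem integral_lagrange_identity [CompleteSpace E] (h : SolvesSturmLiouville P q w a b φ u ψ)
    (h' : SolvesSturmLiouville P q w a b φ' u' ψ') :
    ∫ x in a..b, w x * (⟪φ x, ψ' x⟫_ℝ - ⟪ψ x, φ' x⟫_ℝ) =
      (⟪u b, φ' b⟫_ℝ - ⟪φ b, u' b⟫_ℝ) - (⟪u a, φ' a⟫_ℝ - ⟪φ a, u' a⟫_ℝ) := by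
  have hW := h.isIndefiniteIntegral_inner h'
  have hW' := h'.isIndefiniteIntegral_inner h
  calc ∫ x in a..b, w x * (⟪φ x, ψ' x⟫_ℝ - ⟪ψ x, φ' x⟫_ℝ)
      = (⟪u b, φ' b⟫_ℝ - ⟪u a, φ' a⟫_ℝ) - (⟪u' b, φ b⟫_ℝ - ⟪u' a, φ a⟫_ℝ) := by
        rw [← hW.integral_eq_sub left_mem_uIcc right_mem_uIcc,
          ← hW'.integral_eq_sub left_mem_uIcc right_mem_uIcc,
          ← intervalIntegral.integral_sub hW.intervalIntegrable hW'.intervalIntegrable]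
        congr with x
        rw [real_inner_comm (u x) (u' x), real_inner_comm (φ x) (φ' x),
          real_inner_comm (φ x) (ψ' x)]
        ring
    _ = _ := by
        rw [real_inner_comm (φ b), real_inner_comm (φ a)]
        ring

theorem integral_inner_eq_zero [CompleteSpace E] {lam μ : ℝ} (hlam : lam ≠ μ)
    (h : SolvesSturmLiouville P q w a b φ u fun x => lam • φ x)
    (h' : SolvesSturmLiouville P q w a b φ' u' fun x => μ • φ' x)
    (ha : ⟪u a, φ' a⟫_ℝ - ⟪φ a, u' a⟫_ℝ = 0) (hb : ⟪u b, φ' b⟫_ℝ - ⟪φ b, u' b⟫_ℝ = 0) :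
    ∫ x in a..b, w x * ⟪φ x, φ' x⟫_ℝ = 0 := by
  have hlagrange := h.integral_lagrange_identity h'
  simp only [real_inner_smul_right, real_inner_smul_left, ← sub_mul, mul_left_comm (w _), ha, hb,
    sub_self, intervalIntegral.integral_const_mul] at hlagrange
  exact (mul_eq_zero.1 hlagrange).resolve_left (sub_ne_zero.2 hlam.symm)

theorem eq_zero_of_quasiDeriv_eq_zero [CompleteSpace E] {lam : ℝ}
    (h : SolvesSturmLiouville P q w a b φ u fun x => lam • φ x)
    (hP : IntervalIntegrable P volume a b) (hq : IntervalIntegrable q volume a b)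
    (hw : IntervalIntegrable w volume a b) {x y : ℝ} (hx : x ∈ [[a, b]]) (hy : y ∈ [[a, b]])
    (hφx : φ x = 0) (hux : u x = 0) : φ y = 0 := by
  have hφ := h.isIndefiniteIntegral
  have hu := h.isIndefiniteIntegral_quasiDeriv
  have hk : IntervalIntegrable (fun t => P t + q t - w t * lam) volume a b :=
    (hP.add hq).sub (hw.mul_const lam)
  have hy0 := ((hφ.inner hφ).add (hu.inner hu)).eq_zero_of_norm_le_mul_norm hk (fun t _ => ?_) hx
    hy (by simp [hφx, hux])
  · simp only [real_inner_self_eq_norm_sq] at hy0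
    have hsq : ‖φ y‖ ^ 2 = 0 := by linarith [sq_nonneg ‖φ y‖, sq_nonneg ‖u y‖]
    simpa using hsq
  · calc _ = ‖(P t + q t - w t * lam) * (2 * ⟪φ t, u t⟫_ℝ)‖ := by
          congr 1
          simp only [inner_sub_left, inner_sub_right, real_inner_smul_left, real_inner_smul_right,
            real_inner_comm (φ t) (u t)]
          ring
      _ ≤ ‖P t + q t - w t * lam‖ * ‖⟪φ t, φ t⟫_ℝ + ⟪u t, u t⟫_ℝ‖ := by
          rw [norm_mul]
          gcongr
          calc ‖2 * ⟪φ t, u t⟫_ℝ‖ ≤ 2 * ‖φ t‖ * ‖u t‖ := by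
                rw [norm_mul, Real.norm_two, mul_assoc]
                gcongr
                exact norm_inner_le_norm _ _
            _ ≤ ‖φ t‖ ^ 2 + ‖u t‖ ^ 2 := two_mul_le_add_sq _ _
            _ = ⟪φ t, φ t⟫_ℝ + ⟪u t, u t⟫_ℝ := by simp only [real_inner_self_eq_norm_sq]
            _ ≤ _ := le_abs_self _

theorem intervalIntegrable_mul_norm_sq (h : SolvesSturmLiouville P q w a b φ u ψ)
    (hP : IntervalIntegrable P volume a b) :
    IntervalIntegrable (fun t => P t * ‖u t‖ ^ 2) volume a b :=
  hP.mul_continuousOn (h.continuousOn_quasiDeriv.norm.pow 2)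

theorem norm_sub_sq_le (h : SolvesSturmLiouville P q w a b φ u ψ)
    (hP : IntervalIntegrable P volume a b) (hP_nonneg : ∀ᵐ x ∂volume.restrict (Ι a b), 0 ≤ P x)
    {x y : ℝ} (hx : x ∈ [[a, b]]) (hy : y ∈ [[a, b]]) :
    ‖φ y - φ x‖ ^ 2 ≤ |∫ t in x..y, P t| * |∫ t in a..b, P t * ‖u t‖ ^ 2| := by
  have hsub : Ι x y ⊆ Ι a b := uIoc_subset_uIoc_of_uIcc_subset_uIcc (uIcc_subset_uIcc hx hy)
  have hPu2 := intervalIntegrable_iff.1 (h.intervalIntegrable_mul_norm_sq hP)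
  have hnonneg : ∀ᵐ t ∂volume.restrict (Ι a b), 0 ≤ P t * ‖u t‖ ^ 2 :=
    hP_nonneg.mono fun t ht => by positivity
  have hP_nonneg' := ae_restrict_of_ae_restrict_of_subset hsub hP_nonneg
  have hnorm : ∫ t in Ι x y, ‖P t • u t‖ = ∫ t in Ι x y, P t * ‖u t‖ :=
    integral_congr_ae (hP_nonneg'.mono fun t ht => by
      simp only [norm_smul, Real.norm_of_nonneg ht])
  calc ‖φ y - φ x‖ ^ 2
      = ‖∫ t in x..y, P t • u t‖ ^ 2 := by rw [h.isIndefiniteIntegral.integral_eq_sub hx hy]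
    _ ≤ (∫ t in Ι x y, P t * ‖u t‖) ^ 2 := by
        rw [← hnorm]
        gcongr
        exact intervalIntegral.norm_integral_le_integral_norm_uIoc
    _ ≤ (∫ t in Ι x y, P t) * ∫ t in Ι x y, P t * ‖u t‖ ^ 2 :=
        sq_integral_mul_le_integral_mul_integral hP_nonneg'
          ((intervalIntegrable_iff.1 hP).mono_set hsub)
          ((intervalIntegrable_iff.1 (hP.mul_continuousOn h.continuousOn_quasiDeriv.norm)).mono_set
            hsub) (hPu2.mono_set hsub)
    _ ≤ |∫ t in x..y, P t| * |∫ t in a..b, P t * ‖u t‖ ^ 2| := by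
        rw [intervalIntegral.abs_integral_eq_abs_integral_uIoc,
          intervalIntegral.abs_integral_eq_abs_integral_uIoc (fun t => P t * ‖u t‖ ^ 2)]
        gcongr
        · exact integral_nonneg_of_ae (ae_restrict_of_ae_restrict_of_subset hsub hnonneg)
        · exact le_abs_self _
        · exact (setIntegral_mono_set hPu2 hnonneg hsub.eventuallyLE).trans (le_abs_self _)

theorem integral_energy_le [CompleteSpace E] (h : SolvesSturmLiouville P q w a b φ u ψ)
    (hab : a ≤ b) (hP : IntervalIntegrable P volume a b) (hq : IntervalIntegrable q volume a b)
    (hw : IntervalIntegrable w volume a b) (hψ : ContinuousOn ψ [[a, b]]) (ha : φ a = 0)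
    (hb : φ b = 0) (hneg : ∫ x in a..b, w x * ⟪ψ x, φ x⟫_ℝ ≤ 0) :
    ∫ x in a..b, P x * ‖u x‖ ^ 2 ≤ ∫ x in a..b, |q x| * ‖φ x‖ ^ 2 := by
  have hPu := h.intervalIntegrable_mul_norm_sq hP
  have hqφ : IntervalIntegrable (fun x => q x * ‖φ x‖ ^ 2) volume a b :=
    hq.mul_continuousOn (h.continuousOn.norm.pow 2)
  have hwψ : IntervalIntegrable (fun x => w x * ⟪ψ x, φ x⟫_ℝ) volume a b :=
    hw.mul_continuousOn (hψ.inner h.continuousOn)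
  have hgreen := (h.isIndefiniteIntegral_inner h).integral_eq_sub left_mem_uIcc right_mem_uIcc
  simp only [real_inner_self_eq_norm_sq, ha, hb, inner_zero_right, sub_self] at hgreen
  rw [intervalIntegral.integral_sub (hPu.add hqφ) hwψ, intervalIntegral.integral_add hPu hqφ]
    at hgreen
  have habs : -∫ x in a..b, q x * ‖φ x‖ ^ 2 ≤ ∫ x in a..b, |q x| * ‖φ x‖ ^ 2 := by
    rw [← intervalIntegral.integral_neg]
    refine intervalIntegral.integral_mono_on hab hqφ.neg
      (hq.abs.mul_continuousOn (h.continuousOn.norm.pow 2)) fun x _ => ?_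
    rw [← neg_mul]
    gcongr
    exact neg_le_abs _
  linarith

theorem eq_zero_of_isMaxOn_norm [CompleteSpace E] (h : SolvesSturmLiouville P q w a b φ u ψ)
    (hab : a ≤ b) (hP : IntervalIntegrable P volume a b)
    (hP_nonneg : ∀ᵐ x ∂volume.restrict (Ι a b), 0 ≤ P x) (hq : IntervalIntegrable q volume a b)
    (hw : IntervalIntegrable w volume a b) (hψ : ContinuousOn ψ [[a, b]]) (ha : φ a = 0)
    (hb : φ b = 0) (hneg : ∫ x in a..b, w x * ⟪ψ x, φ x⟫_ℝ ≤ 0) {m y : ℝ} (hm : m ∈ [[a, b]])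
    (hmax : IsMaxOn (‖φ ·‖) [[a, b]] m) (hy : y ∈ [[a, b]]) (hφy : φ y = 0)
    (hmy : |∫ t in y..m, P t| * ∫ t in a..b, |q t| < 1) : φ m = 0 := by
  have henergy_nonneg : 0 ≤ ∫ x in a..b, P x * ‖u x‖ ^ 2 := by
    rw [intervalIntegral.integral_of_le hab, ← uIoc_of_le hab]
    exact integral_nonneg_of_ae (hP_nonneg.mono fun x hx => by positivity)
  have hpotential : ∫ x in a..b, |q x| * ‖φ x‖ ^ 2 ≤ (∫ x in a..b, |q x|) * ‖φ m‖ ^ 2 := by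
    rw [← intervalIntegral.integral_mul_const]
    refine intervalIntegral.integral_mono_on hab
      (hq.abs.mul_continuousOn (h.continuousOn.norm.pow 2)) (hq.abs.mul_const _) fun x hx => ?_
    gcongr
    exact hmax (Icc_subset_uIcc hx)
  have hcontraction : ‖φ m‖ ^ 2 ≤ (|∫ t in y..m, P t| * ∫ t in a..b, |q t|) * ‖φ m‖ ^ 2 := calc
    ‖φ m‖ ^ 2 = ‖φ m - φ y‖ ^ 2 := by rw [hφy, sub_zero]
    _ ≤ |∫ t in y..m, P t| * ∫ x in a..b, P x * ‖u x‖ ^ 2 := by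
      simpa only [abs_of_nonneg henergy_nonneg] using h.norm_sub_sq_le hP hP_nonneg hy hm
    _ ≤ |∫ t in y..m, P t| * ((∫ t in a..b, |q t|) * ‖φ m‖ ^ 2) := by
      gcongr
      exact (h.integral_energy_le hab hP hq hw hψ ha hb hneg).trans hpotential
    _ = _ := (mul_assoc _ _ _).symm
  by_contra hne
  have hpos : 0 < ‖φ m‖ ^ 2 := by positivity
  exact hmy.not_ge (le_of_mul_le_mul_right (by rwa [one_mul]) hpos)

theorem exists_finset_forall_eq_zero [CompleteSpace E] (hab : a ≤ b)
    (hP : IntervalIntegrable P volume a b) (hP_nonneg : ∀ᵐ x ∂volume.restrict (Ι a b), 0 ≤ P x)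
    (hq : IntervalIntegrable q volume a b) (hw : IntervalIntegrable w volume a b) :
    ∃ T : Finset ℝ, ∀ φ u ψ : ℝ → E, SolvesSturmLiouville P q w a b φ u ψ →
      ContinuousOn ψ [[a, b]] → ∫ x in a..b, w x * ⟪ψ x, φ x⟫_ℝ ≤ 0 → (∀ y ∈ T, φ y = 0) →
      ∀ x ∈ [[a, b]], φ x = 0 := by
  classical
  have hprim : IsIndefiniteIntegral (fun x => ∫ t in a..x, P t) P a b := ⟨hP, fun x _ => by simp⟩
  have hq_nonneg : 0 ≤ ∫ t in a..b, |q t| :=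
    intervalIntegral.integral_nonneg hab fun _ _ => abs_nonneg _
  obtain ⟨T, hT⟩ := exists_finset_forall_exists_dist_lt isCompact_uIcc hprim.continuousOn
    (δ := ((∫ t in a..b, |q t|) + 1)⁻¹) (by positivity)
  refine ⟨insert a (insert b T), fun φ u ψ h hψ hneg hzero => ?_⟩
  simp only [Finset.forall_mem_insert] at hzero
  obtain ⟨ha, hb, hzero⟩ := hzero
  obtain ⟨m, hm, hmax⟩ := isCompact_uIcc.exists_isMaxOn nonempty_uIcc h.continuousOn.norm
  obtain ⟨y, hyT, hy, hmy⟩ := hT m hm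
  rw [Real.dist_eq, ← hprim.integral_eq_sub hy hm] at hmy
  have hφm : φ m = 0 := by
    refine h.eq_zero_of_isMaxOn_norm hab hP hP_nonneg hq hw hψ ha hb hneg hm hmax hy
      (hzero y hyT) ?_
    calc |∫ t in y..m, P t| * ∫ t in a..b, |q t|
        ≤ ((∫ t in a..b, |q t|) + 1)⁻¹ * ∫ t in a..b, |q t| := by gcongr
      _ < 1 := (inv_mul_lt_one₀ (by positivity)).2 (lt_add_one _)
  intro x hx
  simpa [hφm] using hmax hx

/- Where a solution vanishes, so does `w` times its right-hand side, and on linear combinations of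
eigenfunctions passing to the right-hand side multiplies each coefficient by its eigenvalue. -/
theorem ae_sum_pow_smul_eq_zero [CompleteSpace E]
    (hP : ∀ᵐ x ∂volume.restrict (Ι a b), P x ≠ 0) {ι : Type*} [Fintype ι] {lam : ι → ℝ}
    {φ u : ι → ℝ → E}
    (h : ∀ i, SolvesSturmLiouville P q w a b (φ i) (u i) fun x => lam i • φ i x) {c : ι → ℝ}
    (hc : ∀ x ∈ [[a, b]], ∑ i, c i • φ i x = 0) (n : ℕ) :
    ∀ᵐ x ∂volume.restrict (Ι a b), w x ≠ 0 → ∑ i, lam i ^ n • c i • φ i x = 0 := by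
  induction n with
  | zero =>
    filter_upwards [ae_restrict_mem measurableSet_uIoc] with x hx _
    simpa using hc x (uIoc_subset_uIcc hx)
  | succ n ih =>
    have hsum := sum_smul Finset.univ (fun i => lam i ^ n * c i) h
    filter_upwards [ih, hsum.ae_eq_zero_imp hP] with x hn hzero hwx
    simp only [mul_smul] at hzero
    simpa only [pow_succ, mul_smul, smul_comm (lam _) (c _)] using
      (smul_eq_zero.1 (hzero (hn hwx)).2).resolve_left hwx

theorem eq_zero_of_forall_sum_smul_eq_zero [CompleteSpace E]
    (hP : IntervalIntegrable P volume a b) (hP_ne : ∀ᵐ x ∂volume.restrict (Ι a b), P x ≠ 0)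
    (hq : IntervalIntegrable q volume a b) (hw : IntervalIntegrable w volume a b)
    (hw_ne : ∃ᶠ x in ae (volume.restrict (Ι a b)), w x ≠ 0) {ι : Type*} [Fintype ι]
    {lam : ι → ℝ} (hlam : Function.Injective lam) {φ u : ι → ℝ → E}
    (h : ∀ i, SolvesSturmLiouville P q w a b (φ i) (u i) fun x => lam i • φ i x)
    (hne : ∀ i, ∃ x ∈ [[a, b]], φ i x ≠ 0) {c : ι → ℝ}
    (hc : ∀ x ∈ [[a, b]], ∑ i, c i • φ i x = 0) : c = 0 := by
  funext i
  by_contra hci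
  have hpow := ae_all_iff.2 (ae_sum_pow_smul_eq_zero hP_ne h hc)
  obtain ⟨x, hwx, hx, hpow, hu⟩ := (hw_ne.and_eventually
    ((ae_restrict_mem measurableSet_uIoc).and
      (hpow.and ((h i).ae_eq_zero_imp hP_ne)))).exists
  have hφx : φ i x = 0 := (smul_eq_zero.1
    (eq_zero_of_forall_sum_pow_smul_eq_zero hlam (fun n => hpow n hwx) i)).resolve_left hci
  obtain ⟨y, hy, hφy⟩ := hne i
  exact hφy ((h i).eq_zero_of_quasiDeriv_eq_zero hP hq hw (uIoc_subset_uIcc hx) hy hφx (hu hφx).1)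

end SolvesSturmLiouville

end Solutions

section RealGhostStates

variable {E : Type*} [NormedAddCommGroup E] [InnerProductSpace ℝ E] {P q w : ℝ → ℝ} {a b : ℝ}
  {α β : ℝ × ℝ}

/-- A real ghost state: a nonzero eigenfunction `φ`, with quasi-derivative `u`, of
`-(p φ')' + q φ = lam w φ` for the real eigenvalue `lam`, under separated boundary conditions with
coefficients `α` at `a` and `β` at `b`, such that `lam * ∫ w ‖φ‖ ^ 2 ≤ 0`. As in
`SolvesSturmLiouville`, `P = 1 / p`. -/
structure IsRealGhostState (P q w : ℝ → ℝ) (a b : ℝ) (α β : ℝ × ℝ) (lam : ℝ) (φ u : ℝ → E) :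
    Prop where
  solves : SolvesSturmLiouville P q w a b φ u fun x => lam • φ x
  exists_ne_zero : ∃ x ∈ [[a, b]], φ x ≠ 0
  left_boundary : α.1 • φ a + α.2 • u a = 0
  right_boundary : β.1 • φ b + β.2 • u b = 0
  mul_integral_nonpos : lam * ∫ x in a..b, w x * ‖φ x‖ ^ 2 ≤ 0

namespace IsRealGhostState

theorem integral_inner_sum_nonpos [CompleteSpace E] (hα : α ≠ 0) (hβ : β ≠ 0)
    (hw : IntervalIntegrable w volume a b) {ι : Type*} [Fintype ι] {lam : ι → ℝ}
    (hlam : Function.Injective lam) {φ u : ι → ℝ → E}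
    (h : ∀ i, IsRealGhostState P q w a b α β (lam i) (φ i) (u i)) (c : ι → ℝ) :
    ∫ x in a..b, w x * ⟪∑ i, c i • lam i • φ i x, ∑ i, c i • φ i x⟫_ℝ ≤ 0 := by
  have hint (i j : ι) : IntervalIntegrable (fun x => w x * ⟪φ i x, φ j x⟫_ℝ) volume a b :=
    hw.mul_continuousOn ((h i).solves.continuousOn.inner (h j).solves.continuousOn)
  have horth {i j : ι} (hij : j ≠ i) : ∫ x in a..b, w x * ⟪φ i x, φ j x⟫_ℝ = 0 :=
    (h i).solves.integral_inner_eq_zero (hlam.ne hij.symm) (h j).solves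
      (inner_sub_inner_eq_zero_of_smul_add_smul_eq_zero hα (h i).left_boundary
        (h j).left_boundary)
      (inner_sub_inner_eq_zero_of_smul_add_smul_eq_zero hβ (h i).right_boundary
        (h j).right_boundary)
  calc ∫ x in a..b, w x * ⟪∑ i, c i • lam i • φ i x, ∑ i, c i • φ i x⟫_ℝ
      = ∫ x in a..b, ∑ i, ∑ j, c i * lam i * c j * (w x * ⟪φ i x, φ j x⟫_ℝ) := by
        congr with x
        simp only [sum_inner, Finset.mul_sum]
        simp only [inner_sum, real_inner_smul_left, real_inner_smul_right, Finset.mul_sum]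
        exact Finset.sum_congr rfl fun i _ => Finset.sum_congr rfl fun j _ => by ring
    _ = ∑ i, ∑ j, c i * lam i * c j * ∫ x in a..b, w x * ⟪φ i x, φ j x⟫_ℝ := by
        rw [intervalIntegral.integral_finsetSum fun i _ => by
          simpa only [Finset.sum_fn] using
            IntervalIntegrable.sum Finset.univ fun j _ => (hint i j).const_mul (c i * lam i * c j)]
        refine Finset.sum_congr rfl fun i _ => ?_
        rw [intervalIntegral.integral_finsetSum fun j _ => (hint i j).const_mul _]
        simp only [intervalIntegral.integral_const_mul]
    _ = ∑ i, c i ^ 2 * (lam i * ∫ x in a..b, w x * ‖φ i x‖ ^ 2) := by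
        refine Finset.sum_congr rfl fun i _ => ?_
        rw [Finset.sum_eq_single i (fun j _ hj => by rw [horth hj, mul_zero]) (by simp)]
        simp only [real_inner_self_eq_norm_sq]
        ring
    _ ≤ 0 := Finset.sum_nonpos fun i _ =>
        mul_nonpos_of_nonneg_of_nonpos (sq_nonneg _) (h i).mul_integral_nonpos

theorem exists_forall_card_le [FiniteDimensional ℝ E] (hab : a ≤ b)
    (hP : IntervalIntegrable P volume a b) (hP_pos : ∀ᵐ x ∂volume.restrict (Ι a b), 0 < P x)
    (hq : IntervalIntegrable q volume a b) (hw : IntervalIntegrable w volume a b)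
    (hw_ne : ∃ᶠ x in ae (volume.restrict (Ι a b)), w x ≠ 0) (hα : α ≠ 0) (hβ : β ≠ 0) :
    ∃ N : ℕ, ∀ S : Finset ℝ, (∀ lam ∈ S, ∃ φ u : ℝ → E, IsRealGhostState P q w a b α β lam φ u) →
      S.card ≤ N := by
  obtain ⟨T, hT⟩ := SolvesSturmLiouville.exists_finset_forall_eq_zero (E := E) hab hP
    (hP_pos.mono fun x hx => hx.le) hq hw
  refine ⟨T.card * Module.finrank ℝ E, fun S hS => ?_⟩
  by_contra! hcard
  choose φ u h using fun lam : S => hS lam lam.2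
  obtain ⟨c, hc, hcT⟩ := exists_ne_zero_forall_sum_smul_eq_zero (𝕜 := ℝ) φ T
    (by rwa [Fintype.card_coe])
  have hsum := SolvesSturmLiouville.sum_smul Finset.univ c fun lam => (h lam).solves
  have hcont : ContinuousOn (fun x => ∑ lam : S, c lam • (lam : ℝ) • φ lam x) [[a, b]] :=
    continuousOn_finsetSum _ fun lam _ =>
      ((h lam).solves.continuousOn.const_smul (lam : ℝ)).const_smul (c lam)
  have hneg := integral_inner_sum_nonpos hα hβ hw Subtype.val_injective h c
  exact hc (SolvesSturmLiouville.eq_zero_of_forall_sum_smul_eq_zero hP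
    (hP_pos.mono fun x hx => hx.ne') hq hw hw_ne Subtype.val_injective (fun lam => (h lam).solves)
    (fun lam => (h lam).exists_ne_zero) (hT _ _ _ hsum hcont hneg hcT))

end IsRealGhostState

end RealGhostStates

theorem SolvesSturmLiouville.of_complex {p q w : ℝ → ℝ} {a b lam : ℝ} (hab : a ≤ b)
    (hp : IntegrableOn (fun x => 1 / p x) (Ioc a b)) (hq : IntegrableOn q (Ioc a b))
    (hw : IntegrableOn w (Ioc a b)) {φ u : ℝ → ℂ} (hφ : ContinuousOn φ (Icc a b))
    (hu : ContinuousOn u (Icc a b))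
    (hφ_eq : ∀ x ∈ Icc a b, φ x = φ a + ∫ t in a..x, u t / (p t : ℂ))
    (hu_eq : ∀ x ∈ Icc a b,
      u x = u a + ∫ t in a..x, ((q t : ℂ) - (lam : ℂ) * (w t : ℂ)) * φ t) :
    SolvesSturmLiouville (fun x => 1 / p x) q w a b φ u fun x => lam • φ x := by
  rw [← uIoc_of_le hab, ← intervalIntegrable_iff] at hp hq hw
  rw [← uIcc_of_le hab] at hφ hu hφ_eq hu_eq
  have hdiv (t : ℝ) : (1 / p t) • u t = u t / (p t : ℂ) := by
    rw [Complex.real_smul, ofReal_div, ofReal_one, one_div_mul_eq_div]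
  have hmul (t : ℝ) :
      q t • φ t - w t • lam • φ t = ((q t : ℂ) - (lam : ℂ) * (w t : ℂ)) * φ t := by
    simp only [Complex.real_smul]
    ring
  exact ⟨⟨hp.smul_continuousOn hu, by simpa only [hdiv] using hφ_eq⟩,
    ⟨(hq.smul_continuousOn hφ).sub (hw.smul_continuousOn (hφ.const_smul lam)),
      by simpa only [hmul] using hu_eq⟩⟩

theorem exceptional_eigenvalues_finite_general {E : Type*} [NormedAddCommGroup E]
    [InnerProductSpace ℝ E] [FiniteDimensional ℝ E] {a b : ℝ} (hab : a ≤ b) {p q w : ℝ → ℝ}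
    (hp_pos : ∀ᵐ x ∂volume.restrict (Ioc a b), 0 < p x)
    (hp_int : IntegrableOn (fun x => 1 / p x) (Ioc a b)) (hq_int : IntegrableOn q (Ioc a b))
    (hw_int : IntegrableOn w (Ioc a b))
    (hw_ne : ∃ᶠ x in ae (volume.restrict (Ioc a b)), w x ≠ 0) {α β : ℝ × ℝ} (hα : α ≠ 0)
    (hβ : β ≠ 0) :
    {lam : ℝ | ∃ φ u : ℝ → E, IsRealGhostState (fun x => 1 / p x) q w a b α β lam φ u}.Finite := by
  rw [← uIoc_of_le hab] at hp_pos hp_int hq_int hw_int hw_ne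
  rw [← intervalIntegrable_iff] at hp_int hq_int hw_int
  obtain ⟨N, hN⟩ := IsRealGhostState.exists_forall_card_le (E := E) hab hp_int
    (hp_pos.mono fun x hx => one_div_pos.2 hx) hq_int hw_int hw_ne hα hβ
  by_contra hinf
  obtain ⟨S, hS, hcard⟩ := Set.Infinite.exists_subset_card_eq hinf (N + 1)
  have hle : S.card ≤ N := hN S fun lam hlam => hS hlam
  omega

end SturmLiouville

/-- Proposition 4.1 of the paper (for separated self-adjoint boundary
conditions): there are at most finitely many real exceptional eigenvalues,
i.e. real λ ≠ 0 admitting an eigenfunction φ with λ·∫ₐᵇ w|φ|² ≤ 0. -/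
theorem exceptional_eigenvalues_finite
    (a b : ℝ) (hab : a < b) (p q w : ℝ → ℝ)
    (hpm : Measurable p) (hqm : Measurable q) (hwm : Measurable w)
    (hp_pos : ∀ᵐ x ∂(volume.restrict (Set.Ioc a b)), 0 < p x)
    (hp_int : IntegrableOn (fun x => 1 / p x) (Set.Ioc a b))
    (hq_int : IntegrableOn q (Set.Ioc a b))
    (hw_int : IntegrableOn w (Set.Ioc a b))
    (hw_ne : ∀ᵐ x ∂(volume.restrict (Set.Ioc a b)), w x ≠ 0)
    (hw_pos : 0 < volume {x ∈ Set.Ioc a b | 0 < w x})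
    (hw_neg : 0 < volume {x ∈ Set.Ioc a b | w x < 0})
    (l r : ℝ) :
    {lam : ℝ | lam ≠ 0 ∧ ∃ φ u : ℝ → ℂ,
        ContinuousOn φ (Set.Icc a b) ∧ ContinuousOn u (Set.Icc a b)
      ∧ (∀ x ∈ Set.Icc a b, φ x = φ a + ∫ t in a..x, u t / (p t : ℂ))
      ∧ (∀ x ∈ Set.Icc a b,
            u x = u a + ∫ t in a..x, ((q t : ℂ) - (lam : ℂ) * (w t : ℂ)) * φ t)
      ∧ (∃ x ∈ Set.Icc a b, φ x ≠ 0)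
      ∧ u a = (l : ℂ) * φ a ∧ u b = (r : ℂ) * φ b
      ∧ lam * (∫ t in a..b, w t * ‖φ t‖ ^ 2) ≤ 0}.Finite := by
  have : (ae (volume.restrict (Set.Ioc a b))).NeBot := ae_restrict_neBot.2 (by simp [hab])
  refine (exceptional_eigenvalues_finite_general (E := ℂ) (α := (l, -1)) (β := (r, -1)) hab.le
    hp_pos hp_int hq_int hw_int hw_ne.frequently (by simp) (by simp)).subset ?_
  rintro lam ⟨-, φ, u, hφ, hu, hφ_eq, hu_eq, hne, hl, hr, hneg⟩
  exact ⟨φ, u, SolvesSturmLiouville.of_complex hab.le hp_int hq_int hw_int hφ hu hφ_eq hu_eq,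
    by rwa [Set.uIcc_of_le hab.le], by simp [hl], by simp [hr], hneg⟩
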